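/- Let γ : ℝ × ℝ → ℝ² be a smooth family of regular plane curves with speed σ(t,s) := ‖∂_s γ(t,s)‖ > 0, unit tangent τ := σ⁻¹∂_sγ, unit normal n := (τ², −τ¹), and evolution velocity u := ∂_t γ. Then for all (t,s): ∂_t n(t,s) = −( (σ⁻¹∂_s u)(t,s) · n(t,s) ) · τ(t,s). -/

import Mathlib

/-- Dot product on `ℝ²`. -/
def dotp (a b : ℝ × ℝ) : ℝ := a.1 * b.1 + a.2 * b.2

/-- Partial derivative in the time variable of an `ℝ²`-valued function of `(t,s)`. -/
noncomputable def ptd (f : ℝ × ℝ → ℝ × ℝ) (q : ℝ × ℝ) : ℝ × ℝ :=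
  deriv (fun t => f (t, q.2)) q.1

/-- Partial derivative in the parameter variable of an `ℝ²`-valued function of `(t,s)`. -/
noncomputable def psd (f : ℝ × ℝ → ℝ × ℝ) (q : ℝ × ℝ) : ℝ × ℝ :=
  deriv (fun s => f (q.1, s)) q.2

/-!
Equality of mixed partials identifies the time derivative of `∂_sγ` with `∂_s u`. Differentiating
the normalization `τ = σ⁻¹∂_sγ` removes from `σ⁻¹∂_s u` its component along `τ`, which in the
plane leaves `∂_tτ = (σ⁻¹∂_s u · n) n`. Finally `n` is the image of `τ` under the rotation by
`-π/2`, which commutes with `∂_t` and sends `n` to `-τ`.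
-/

open WithLp

section Normalize

variable {E : Type*} [NormedAddCommGroup E] [InnerProductSpace ℝ E] {v : ℝ → E} {v' : E} {t : ℝ}

theorem hasDerivAt_norm (hv : HasDerivAt v v' t) (h0 : v t ≠ 0) :
    HasDerivAt (fun x => ‖v x‖) (inner ℝ (NormedSpace.normalize (v t)) v') t := by
  have hsqrt := hv.norm_sq.sqrt (pow_ne_zero 2 (norm_ne_zero_iff.mpr h0))
  simp only [Real.sqrt_sq (norm_nonneg _)] at hsqrt
  refine hsqrt.congr_deriv ?_
  rw [NormedSpace.normalize, real_inner_smul_left]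
  ring

theorem hasDerivAt_normalize (hv : HasDerivAt v v' t) (h0 : v t ≠ 0) :
    HasDerivAt (fun x => NormedSpace.normalize (v x))
      (‖v t‖⁻¹ • (v' - inner ℝ (NormedSpace.normalize (v t)) v' • NormedSpace.normalize (v t)))
      t := by
  have hinv := (hasDerivAt_norm hv h0).fun_inv (norm_ne_zero_iff.mpr h0)
  refine (hinv.fun_smul hv).congr_deriv ?_
  simp only [NormedSpace.normalize]
  module

end Normalize

section Plane

/-- Rotation of `ℝ²` by `-π/2`, which carries the unit tangent of a curve to its unit normal. It is
a continuous linear map so that it can be moved across derivatives. -/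
def rotateRight : ℝ × ℝ →L[ℝ] ℝ × ℝ :=
  (ContinuousLinearMap.snd ℝ ℝ ℝ).prod (-ContinuousLinearMap.fst ℝ ℝ ℝ)

theorem rotateRight_apply (a : ℝ × ℝ) : rotateRight a = (a.2, -a.1) := rfl

theorem rotateRight_rotateRight (a : ℝ × ℝ) : rotateRight (rotateRight a) = -a := rfl

theorem dotp_smul_left (c : ℝ) (a b : ℝ × ℝ) : dotp (c • a) b = c * dotp a b := by
  simp only [dotp, Prod.smul_fst, Prod.smul_snd, smul_eq_mul]
  ring

-- `ℝ × ℝ` carries the sup norm; the Euclidean structure lives on the copy `WithLp 2 (ℝ × ℝ)`.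
theorem inner_toLp_eq_dotp (a b : ℝ × ℝ) : inner ℝ (toLp 2 a) (toLp 2 b) = dotp a b := by
  simp only [prod_inner_apply, Real.inner_apply, dotp]

theorem norm_toLp_eq_sqrt (a : ℝ × ℝ) : ‖toLp 2 a‖ = √(a.1 ^ 2 + a.2 ^ 2) := by
  simp only [prod_norm_eq_of_L2, toLp_fst, toLp_snd, Real.norm_eq_abs, sq_abs]

theorem sub_dotp_smul_eq_dotp_rotateRight_smul {e : ℝ × ℝ} (he : dotp e e = 1) (w : ℝ × ℝ) :
    w - dotp e w • e = dotp w (rotateRight e) • rotateRight e := by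
  simp only [dotp, rotateRight_apply] at he ⊢
  ext
  · simp only [Prod.fst_sub, Prod.smul_fst, smul_eq_mul]
    linear_combination -w.1 * he
  · simp only [Prod.snd_sub, Prod.smul_snd, smul_eq_mul]
    linear_combination -w.2 * he

theorem hasDerivAt_unitTangent {v : ℝ → ℝ × ℝ} {v' : ℝ × ℝ} {t : ℝ} {σ : ℝ → ℝ} {τ : ℝ → ℝ × ℝ}
    (hv : HasDerivAt v v' t) (hσ : ∀ x, σ x = √((v x).1 ^ 2 + (v x).2 ^ 2)) (h0 : 0 < σ t)
    (hτ : ∀ x, τ x = (σ x)⁻¹ • v x) :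
    HasDerivAt τ (dotp ((σ t)⁻¹ • v') (rotateRight (τ t)) • rotateRight (τ t)) t := by
  have hnorm : ∀ x, ‖toLp 2 (v x)‖ = σ x := fun x => by rw [norm_toLp_eq_sqrt, hσ]
  have hnormalize : ∀ x, NormedSpace.normalize (toLp 2 (v x)) = toLp 2 (τ x) := fun x => by
    rw [NormedSpace.normalize, hnorm, hτ, toLp_smul]
  have hne : toLp 2 (v t) ≠ 0 := norm_pos_iff.mp (hnorm t ▸ h0)
  have hunit : dotp (τ t) (τ t) = 1 := by
    rw [← inner_toLp_eq_dotp, ← hnormalize, real_inner_self_eq_norm_sq,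
      NormedSpace.norm_normalize_eq_one_iff.mpr hne, one_pow]
  let L := prodContinuousLinearEquiv 2 ℝ ℝ ℝ
  have hvL : HasDerivAt (fun x => toLp 2 (v x)) (toLp 2 v') t :=
    L.symm.hasFDerivAt.comp_hasDerivAt t hv
  have hτL : HasDerivAt (fun x => toLp 2 (τ x))
      (toLp 2 ((σ t)⁻¹ • (v' - dotp (τ t) v' • τ t))) t := by
    simpa only [hnormalize, hnorm, inner_toLp_eq_dotp, toLp_smul, toLp_sub] using
      hasDerivAt_normalize hvL hne
  rw [dotp_smul_left, mul_smul, ← sub_dotp_smul_eq_dotp_rotateRight_smul hunit]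
  exact L.hasFDerivAt.comp_hasDerivAt t hτL

end Plane

section MixedPartials

section Field

variable {𝕜 E F : Type*} [NontriviallyNormedField 𝕜] [NormedAddCommGroup E] [NormedSpace 𝕜 E]
  [NormedAddCommGroup F] [NormedSpace 𝕜 F]

theorem hasDerivAt_fst_slice {f : 𝕜 × 𝕜 → F} {f' : 𝕜 × 𝕜 →L[𝕜] F} {q : 𝕜 × 𝕜}
    (hf : HasFDerivAt f f' q) : HasDerivAt (fun t => f (t, q.2)) (f' (1, 0)) q.1 :=
  hf.comp_hasDerivAt q.1 ((hasDerivAt_id q.1).prodMk (hasDerivAt_const q.1 q.2))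

theorem hasDerivAt_snd_slice {f : 𝕜 × 𝕜 → F} {f' : 𝕜 × 𝕜 →L[𝕜] F} {q : 𝕜 × 𝕜}
    (hf : HasFDerivAt f f' q) : HasDerivAt (fun s => f (q.1, s)) (f' (0, 1)) q.2 :=
  hf.comp_hasDerivAt q.2 ((hasDerivAt_const q.2 q.1).prodMk (hasDerivAt_id q.2))

theorem hasFDerivAt_fderiv_apply {f : E → F} {x : E} (hf : ContDiffAt 𝕜 2 f x) (w : E) :
    HasFDerivAt (fun y => fderiv 𝕜 f y w) ((fderiv 𝕜 (fderiv 𝕜 f) x).flip w) x := by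
  have hfderiv : DifferentiableAt 𝕜 (fderiv 𝕜 f) x :=
    (hf.fderiv_right (m := 1) one_add_one_eq_two.le).differentiableAt one_ne_zero
  simpa using hfderiv.hasFDerivAt.clm_apply (hasFDerivAt_const w x)

end Field

variable {γ : ℝ × ℝ → ℝ × ℝ} {q : ℝ × ℝ}

theorem ptd_eq_fderiv (hγ : DifferentiableAt ℝ γ q) : ptd γ q = fderiv ℝ γ q (1, 0) :=
  (hasDerivAt_fst_slice hγ.hasFDerivAt).deriv

theorem psd_eq_fderiv (hγ : DifferentiableAt ℝ γ q) : psd γ q = fderiv ℝ γ q (0, 1) :=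
  (hasDerivAt_snd_slice hγ.hasFDerivAt).deriv

theorem hasFDerivAt_ptd (hγ : ContDiffAt ℝ 2 γ q) :
    HasFDerivAt (ptd γ) ((fderiv ℝ (fderiv ℝ γ) q).flip (1, 0)) q :=
  (hasFDerivAt_fderiv_apply hγ (1, 0)).congr_of_eventuallyEq <|
    (hγ.eventually (by simp)).mono fun _ h => ptd_eq_fderiv (h.differentiableAt two_ne_zero)

theorem hasFDerivAt_psd (hγ : ContDiffAt ℝ 2 γ q) :
    HasFDerivAt (psd γ) ((fderiv ℝ (fderiv ℝ γ) q).flip (0, 1)) q :=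
  (hasFDerivAt_fderiv_apply hγ (0, 1)).congr_of_eventuallyEq <|
    (hγ.eventually (by simp)).mono fun _ h => psd_eq_fderiv (h.differentiableAt two_ne_zero)

theorem hasDerivAt_time_psd (hγ : ContDiffAt ℝ 2 γ q) :
    HasDerivAt (fun t => psd γ (t, q.2)) (psd (ptd γ) q) q.1 := by
  have hsymm : fderiv ℝ (fderiv ℝ γ) q (1, 0) (0, 1) = fderiv ℝ (fderiv ℝ γ) q (0, 1) (1, 0) :=
    hγ.isSymmSndFDerivAt (by simp) (1, 0) (0, 1)
  have hmixed : psd (ptd γ) q = fderiv ℝ (fderiv ℝ γ) q (0, 1) (1, 0) :=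
    (hasDerivAt_snd_slice (hasFDerivAt_ptd hγ)).deriv
  rw [hmixed, ← hsymm]
  exact hasDerivAt_fst_slice (hasFDerivAt_psd hγ)

end MixedPartials

theorem evolution_of_unit_normal_general (γ : ℝ × ℝ → ℝ × ℝ) (q : ℝ × ℝ)
    (hγ : ContDiffAt ℝ 2 γ q) (σ : ℝ × ℝ → ℝ)
    (hσ : ∀ p, σ p = √((psd γ p).1 ^ 2 + (psd γ p).2 ^ 2)) (hσpos : 0 < σ q)
    (τ n u : ℝ × ℝ → ℝ × ℝ)
    (hτ : ∀ p, τ p = (σ p)⁻¹ • psd γ p)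
    (hn : ∀ p, n p = ((τ p).2, -(τ p).1))
    (hu : ∀ p, u p = ptd γ p) :
    HasDerivAt (fun t => n (t, q.2)) (-(dotp ((σ q)⁻¹ • psd u q) (n q)) • τ q) q.1 := by
  obtain rfl : n = fun p => rotateRight (τ p) := funext hn
  obtain rfl : u = ptd γ := funext hu
  have hτ' : HasDerivAt (fun t => τ (t, q.2))
      (dotp ((σ q)⁻¹ • psd (ptd γ) q) (rotateRight (τ q)) • rotateRight (τ q)) q.1 :=
    hasDerivAt_unitTangent (hasDerivAt_time_psd hγ) (fun t => hσ (t, q.2)) hσpos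
      (fun t => hτ (t, q.2))
  have hn' := rotateRight.hasFDerivAt.comp_hasDerivAt q.1 hτ'
  rwa [map_smul, rotateRight_rotateRight, smul_neg, ← neg_smul] at hn'

/-- Evolution of the unit normal of a moving regular plane curve:
`𝒟_t n = −(∇_τ u · n) τ`, where `u = ∂_tγ` is the evolution velocity, `σ = ‖∂_sγ‖` the
speed, `τ = σ⁻¹∂_sγ` the unit tangent, and `n = (τ², −τ¹)` the unit normal. -/
theorem evolution_of_unit_normal (γ : ℝ × ℝ → ℝ × ℝ) (hγ : ContDiff ℝ (⊤ : ℕ∞) γ)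
    (σ : ℝ × ℝ → ℝ)
    (hσ : ∀ q, σ q = Real.sqrt ((psd γ q).1 ^ 2 + (psd γ q).2 ^ 2))
    (hσpos : ∀ q, 0 < σ q)
    (τ n u : ℝ × ℝ → ℝ × ℝ)
    (hτ : ∀ q, τ q = (σ q)⁻¹ • psd γ q)
    (hn : ∀ q, n q = ((τ q).2, -(τ q).1))
    (hu : ∀ q, u q = ptd γ q) :
    ∀ q, ptd n q = (-(dotp ((σ q)⁻¹ • psd u q) (n q))) • τ q := fun q =>
  (evolution_of_unit_normal_general γ q (hγ.contDiffAt.of_le (by norm_cast)) σ hσ (hσpos q)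
    τ n u hτ hn hu).deriv
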